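/- arXiv:2305.10176 — 4 statements merged into one kernel-verified Lean document; each statement's English description precedes it below -/
import Mathlib

section
/- Let N ≥ 3 be an integer, let D be an open subset of the unit sphere S^{N-1} ⊂ ℝ^N, let Σ_D = {s·q : q ∈ D, s > 0} be the cone spanned by D and S_D = Σ_D ∩ B_1 the spherical sector. Let v : ℝ^N → ℝ be continuously differentiable with compact support contained in cl(S_D) \ {x : |x| = 1 and x/|x| ∈ D} (i.e. v vanishes near the spherical cap D). Then ((N-2)²/4) · ∫_{S_D} v(x)²/|x|² dx ≤ ∫_{S_D} |∇v(x)|² dx, the inequality being understood in [0,∞]. -/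
/-!
The inequality is obtained by integrating a one-dimensional weighted Hardy inequality along rays.

In polar coordinates (`lintegral_polar`) both sides are integrals over directions `q ∈ D` of
integrals in `r ∈ (0, 1)` with weight `r ^ (N - 1)`. Put `w r = v (r • q)`. The support condition
gives `w 1 = v q = 0`, and `|w' r| ≤ ‖fderiv ℝ v (r • q)‖` because `‖q‖ = 1`. With `n = N - 2`,
`r ^ (n + 1) * w' ^ 2 - n ^ 2 / 4 * r ^ (n - 1) * w ^ 2`
`  = r ^ (n - 1) * (r * w' + n / 2 * w) ^ 2 - n / 2 * (r ^ n * w ^ 2)'`,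
and the last term integrates to zero over `(0, 1)`, since `r ^ n` vanishes at `0` and `w` at `1`.
This is `hardy_one_dim`.
-/

open MeasureTheory Real Set

/-- One-dimensional weighted Hardy inequality on `(0, 1)`, with no condition on `w` at `0`;
used with `m = N - 3`, so that `(m + 1) ^ 2 / 4` is the constant `(N - 2) ^ 2 / 4`. -/
lemma hardy_one_dim (m : ℕ) (w w' : ℝ → ℝ) (hw : ∀ r, HasDerivAt w (w' r) r)
    (hw' : Continuous w') (h1 : w 1 = 0) :
    ((m : ℝ) + 1) ^ 2 / 4 * ∫ r in (0 : ℝ)..1, r ^ m * w r ^ 2 ≤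
      ∫ r in (0 : ℝ)..1, r ^ (m + 2) * w' r ^ 2 := by
  have hwc : Continuous w := continuous_iff_continuousAt.2 fun r ↦ (hw r).continuousAt
  have hd : ∀ r, HasDerivAt (fun r ↦ r ^ (m + 1) * w r ^ 2)
      (((m : ℝ) + 1) * r ^ m * w r ^ 2 + r ^ (m + 1) * (2 * w r * w' r)) r := by
    intro r
    exact ((hasDerivAt_pow (m + 1) r).mul ((hw r).pow 2)).congr_deriv (by simp)
  have hftc := intervalIntegral.integral_eq_sub_of_hasDerivAt (a := 0) (b := 1)
    (fun r _ ↦ hd r) (Continuous.intervalIntegrable (by fun_prop) _ _)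
  have hz : (∫ r in (0 : ℝ)..1,
      (((m : ℝ) + 1) * r ^ m * w r ^ 2 + r ^ (m + 1) * (2 * w r * w' r))) = 0 := by
    rw [hftc, h1]; simp
  have hsq : 0 ≤ ∫ r in (0 : ℝ)..1, r ^ m * (r * w' r + ((m : ℝ) + 1) / 2 * w r) ^ 2 := by
    apply intervalIntegral.integral_nonneg zero_le_one
    intro r hr
    have := hr.1
    positivity
  have key : (∫ r in (0 : ℝ)..1, r ^ m * (r * w' r + ((m : ℝ) + 1) / 2 * w r) ^ 2) =
      (∫ r in (0 : ℝ)..1, r ^ (m + 2) * w' r ^ 2)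
      - ((m : ℝ) + 1) ^ 2 / 4 * (∫ r in (0 : ℝ)..1, r ^ m * w r ^ 2)
      + ((m : ℝ) + 1) / 2 * (∫ r in (0 : ℝ)..1,
      (((m : ℝ) + 1) * r ^ m * w r ^ 2 + r ^ (m + 1) * (2 * w r * w' r))) := by
    rw [← intervalIntegral.integral_const_mul, ← intervalIntegral.integral_const_mul,
      ← intervalIntegral.integral_sub, ← intervalIntegral.integral_add]
    · congr 1
      ext r
      ring
    all_goals exact Continuous.intervalIntegrable (by fun_prop) _ _
  rw [hz] at key
  linarith

lemma lintegral_Ioo_ofReal {f : ℝ → ℝ} (hf : Continuous f) (h0 : ∀ r ∈ Ioo (0 : ℝ) 1, 0 ≤ f r) :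
    ∫⁻ r in Ioo (0 : ℝ) 1, ENNReal.ofReal (f r) =
      ENNReal.ofReal (∫ r in (0 : ℝ)..1, f r) := by
  rw [intervalIntegral.integral_of_le zero_le_one, integral_Ioc_eq_integral_Ioo,
    ofReal_integral_eq_lintegral_ofReal]
  · exact (hf.integrableOn_Icc (a := 0) (b := 1)).mono_set Ioo_subset_Icc_self
  · filter_upwards [ae_restrict_mem measurableSet_Ioo] with r hr using h0 r hr

/-- Integration in polar coordinates for nonnegative functions. -/
lemma lintegral_polar {E : Type*} [NormedAddCommGroup E] [NormedSpace ℝ E] [MeasurableSpace E]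
    [BorelSpace E] [FiniteDimensional ℝ E] [Nontrivial E] (μ : Measure E) [μ.IsAddHaarMeasure]
    (f : E → ENNReal) (hf : Measurable f) :
    ∫⁻ x, f x ∂μ = ∫⁻ q : Metric.sphere (0 : E) 1, (∫⁻ r in Ioi (0 : ℝ),
      ENNReal.ofReal (r ^ (Module.finrank ℝ E - 1)) * f (r • (q : E))) ∂μ.toSphere := by
  calc ∫⁻ x, f x ∂μ = ∫⁻ x : ({(0)}ᶜ : Set E), f x ∂(μ.comap (↑)) := by
        rw [lintegral_subtype_comap (measurableSet_singleton _).compl, restrict_compl_singleton]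
    _ = ∫⁻ p, f ((p.2 : ℝ) • (p.1 : E))
          ∂μ.toSphere.prod (.volumeIoiPow (Module.finrank ℝ E - 1)) := by
        rw [← μ.measurePreserving_homeomorphUnitSphereProd.lintegral_comp_emb
          (Homeomorph.measurableEmbedding _)]
        refine lintegral_congr fun x ↦ ?_
        have hx : (x : E) ≠ 0 := x.2
        simp [smul_smul, hx]
    _ = _ := by
        rw [lintegral_prod _ (by fun_prop)]
        refine lintegral_congr fun q ↦ ?_
        rw [Measure.volumeIoiPow, lintegral_withDensity_eq_lintegral_mul _ (by fun_prop)
          (by fun_prop)]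
        exact lintegral_subtype_comap measurableSet_Ioi
          (fun r : ℝ ↦ ENNReal.ofReal (r ^ (Module.finrank ℝ E - 1)) * f (r • (q : E)))

open scoped Pointwise in
/-- Polar coordinates on a spherical sector. -/
lemma lintegral_sector {E : Type*} [NormedAddCommGroup E] [NormedSpace ℝ E] [MeasurableSpace E]
    [BorelSpace E] [FiniteDimensional ℝ E] [Nontrivial E] (μ : Measure E) [μ.IsAddHaarMeasure]
    (D : Set E) (hD : D ⊆ Metric.sphere (0 : E) 1)
    (hDopen : IsOpen (((↑) : Metric.sphere (0 : E) 1 → E) ⁻¹' D))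
    (f : E → ENNReal) (hf : Measurable f) :
    ∫⁻ x in ({x | ∃ q ∈ D, ∃ s : ℝ, 0 < s ∧ x = s • q} : Set E) ∩ Metric.ball 0 1, f x ∂μ =
      ∫⁻ q in (((↑) : Metric.sphere (0 : E) 1 → E) ⁻¹' D), (∫⁻ r in Ioo (0 : ℝ) 1,
      ENNReal.ofReal (r ^ (Module.finrank ℝ E - 1)) * f (r • (q : E))) ∂μ.toSphere := by
  set S := ({x | ∃ q ∈ D, ∃ s : ℝ, 0 < s ∧ x = s • q} : Set E) ∩ Metric.ball 0 1
  have hmem : ∀ (q : Metric.sphere (0 : E) 1) (r : ℝ), 0 < r →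
      (r • (q : E) ∈ S ↔ (q : E) ∈ D ∧ r < 1) := by
    intro q r hr
    have hq : ‖(q : E)‖ = 1 := by simp
    constructor
    · rintro ⟨⟨p, hp, s, hs, hps⟩, hb⟩
      have hp1 : ‖p‖ = 1 := by simpa using hD hp
      have hrs : r = s := by
        simpa [norm_smul, hq, hp1, abs_of_pos hr, abs_of_pos hs] using congrArg norm hps
      subst hrs
      have : (q : E) = p := smul_right_injective E hr.ne' hps
      refine ⟨this ▸ hp, ?_⟩
      simpa [norm_smul, abs_of_pos hr] using hb
    · rintro ⟨hqD, h1⟩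
      exact ⟨⟨q, hqD, r, hr, rfl⟩, by simpa [norm_smul, abs_of_pos hr] using h1⟩
  have hS : MeasurableSet S := by
    have : S = Ioo (0 : ℝ) 1 • (((↑) : Metric.sphere (0 : E) 1 → E) ''
        (((↑) : Metric.sphere (0 : E) 1 → E) ⁻¹' D)) := by
      ext x
      constructor
      · rintro ⟨⟨p, hp, s, hs, rfl⟩, hb⟩
        exact ⟨s, ⟨hs, ((hmem ⟨p, hD hp⟩ s hs).1 ⟨⟨p, hp, s, hs, rfl⟩, hb⟩).2⟩, p,
          ⟨⟨p, hD hp⟩, hp, rfl⟩, rfl⟩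
      · rintro ⟨s, hs, _, ⟨q, hq, rfl⟩, rfl⟩
        exact (hmem q s hs.1).2 ⟨hq, hs.2⟩
    rw [this]
    exact (isOpen_Ioo.smul_sphere one_ne_zero (by simp) hDopen).measurableSet
  rw [← lintegral_indicator hS, lintegral_polar μ _ (hf.indicator hS),
    ← lintegral_indicator hDopen.measurableSet]
  refine lintegral_congr fun q ↦ ?_
  by_cases hq : (q : E) ∈ D
  · rw [indicator_of_mem (show q ∈ (((↑) : Metric.sphere (0 : E) 1 → E) ⁻¹' D) from hq),
      ← lintegral_indicator measurableSet_Ioo, ← lintegral_indicator measurableSet_Ioi]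
    refine lintegral_congr fun r ↦ ?_
    by_cases h0 : 0 < r
    · by_cases h1 : r < 1
      · simp [h0, h1, (hmem q r h0).2 ⟨hq, h1⟩]
      · simp [h0, h1, show r • (q : E) ∉ S from fun h ↦ h1 ((hmem q r h0).1 h).2]
    · simp [h0]
  · rw [indicator_of_notMem (show q ∉ (((↑) : Metric.sphere (0 : E) 1 → E) ⁻¹' D) from hq)]
    rw [setLIntegral_congr_fun (g := fun _ ↦ 0) measurableSet_Ioi]
    · simp
    · intro r hr
      simp [show r • (q : E) ∉ S from fun h ↦ hq ((hmem q r hr).1 h).1]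

/-- Hardy inequality in a spherical sector (Proposition 2.1). -/
theorem hardy_inequality_spherical_sector
    (N : ℕ) (hN : 3 ≤ N)
    (D : Set (EuclideanSpace ℝ (Fin N)))
    (hD : D ⊆ Metric.sphere (0 : EuclideanSpace ℝ (Fin N)) 1)
    (hDopen : IsOpen (((↑) : Metric.sphere (0 : EuclideanSpace ℝ (Fin N)) 1 →
      EuclideanSpace ℝ (Fin N)) ⁻¹' D))
    (v : EuclideanSpace ℝ (Fin N) → ℝ)
    (hv : ContDiff ℝ 1 v) (hvc : HasCompactSupport v)
    (hsupp : tsupport v ⊆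
      closure (({x | ∃ q ∈ D, ∃ s : ℝ, 0 < s ∧ x = s • q} : Set (EuclideanSpace ℝ (Fin N)))
          ∩ Metric.ball 0 1) \
        {x : EuclideanSpace ℝ (Fin N) | ‖x‖ = 1 ∧ ‖x‖⁻¹ • x ∈ D}) :
    ENNReal.ofReal (((N : ℝ) - 2) ^ 2 / 4) *
      ∫⁻ x in ({x | ∃ q ∈ D, ∃ s : ℝ, 0 < s ∧ x = s • q} : Set (EuclideanSpace ℝ (Fin N)))
          ∩ Metric.ball 0 1, ENNReal.ofReal (v x ^ 2 / ‖x‖ ^ 2) ≤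
    ∫⁻ x in ({x | ∃ q ∈ D, ∃ s : ℝ, 0 < s ∧ x = s • q} : Set (EuclideanSpace ℝ (Fin N)))
          ∩ Metric.ball 0 1, ENNReal.ofReal (‖fderiv ℝ v x‖ ^ 2) := by
  obtain ⟨m, rfl⟩ : ∃ m, N = m + 3 := ⟨N - 3, by omega⟩
  have hvm : Measurable v := hv.continuous.measurable
  have hfd : Continuous (fderiv ℝ v) := hv.continuous_fderiv one_ne_zero
  have hgm : Measurable fun x ↦ ENNReal.ofReal (‖fderiv ℝ v x‖ ^ 2) :=
    (hfd.norm.pow 2).measurable.ennreal_ofReal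
  rw [lintegral_sector volume D hD hDopen _ (by fun_prop),
    lintegral_sector volume D hD hDopen _ hgm,
    ← lintegral_const_mul' _ _ ENNReal.ofReal_ne_top]
  refine setLIntegral_mono' hDopen.measurableSet fun q hq ↦ ?_
  have hqD : (q : EuclideanSpace ℝ (Fin (m + 3))) ∈ D := hq
  have hq1 : ‖(q : EuclideanSpace ℝ (Fin (m + 3)))‖ = 1 := by simp
  have hvq : v q = 0 := by
    by_contra h
    exact (hsupp (subset_tsupport v h)).2 ⟨hq1, by simpa [hq1] using hqD⟩
  have hderiv : ∀ r : ℝ, HasDerivAt (fun r : ℝ ↦ v (r • (q : EuclideanSpace ℝ (Fin (m + 3)))))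
      (fderiv ℝ v (r • (q : EuclideanSpace ℝ (Fin (m + 3)))) q) r := by
    intro r
    have h1 := (hv.differentiable one_ne_zero
      (r • (q : EuclideanSpace ℝ (Fin (m + 3))))).hasFDerivAt
    have h2 : HasDerivAt (fun r : ℝ ↦ r • (q : EuclideanSpace ℝ (Fin (m + 3)))) q r := by
      simpa using (hasDerivAt_id r).smul_const (q : EuclideanSpace ℝ (Fin (m + 3)))
    exact h1.comp_hasDerivAt r h2
  have hw'c : Continuous fun r : ℝ ↦ fderiv ℝ v (r • (q : EuclideanSpace ℝ (Fin (m + 3)))) q := by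
    fun_prop
  have hwc : Continuous fun r : ℝ ↦ v (r • (q : EuclideanSpace ℝ (Fin (m + 3)))) :=
    hv.continuous.comp (by fun_prop)
  have hardy := hardy_one_dim m _ _ hderiv hw'c (by simpa using hvq)
  calc
    _ = ENNReal.ofReal (((m : ℝ) + 1) ^ 2 / 4) * ∫⁻ r in Ioo (0 : ℝ) 1, ENNReal.ofReal
          (r ^ m * v (r • (q : EuclideanSpace ℝ (Fin (m + 3)))) ^ 2) := by
      congr 1
      · congr 1; push_cast; ring
      · refine setLIntegral_congr_fun measurableSet_Ioo fun r hr ↦ ?_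
        have hr0 : 0 < r := hr.1
        simp only [finrank_euclideanSpace, Fintype.card_fin]
        rw [← ENNReal.ofReal_mul (by positivity), norm_smul, hq1, Real.norm_of_nonneg hr0.le]
        congr 1
        rw [show m + 3 - 1 = m + 2 by omega]
        field_simp
        ring
    _ ≤ ∫⁻ r in Ioo (0 : ℝ) 1, ENNReal.ofReal
          (r ^ (m + 2) * (fderiv ℝ v (r • (q : EuclideanSpace ℝ (Fin (m + 3)))) q) ^ 2) := by
      rw [lintegral_Ioo_ofReal (by fun_prop), lintegral_Ioo_ofReal (by fun_prop),
        ← ENNReal.ofReal_mul (by positivity)]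
      · exact ENNReal.ofReal_le_ofReal hardy
      all_goals
        intro r hr
        have := hr.1
        positivity
    _ ≤ _ := by
      refine setLIntegral_mono' measurableSet_Ioo fun r hr ↦ ?_
      have hr0 : 0 < r := hr.1
      simp only [finrank_euclideanSpace, Fintype.card_fin]
      rw [← ENNReal.ofReal_mul (by positivity), show m + 3 - 1 = m + 2 by omega]
      refine ENNReal.ofReal_le_ofReal (mul_le_mul_of_nonneg_left ?_ (by positivity))
      rw [← sq_abs]
      gcongr
      simpa [hq1] using (fderiv ℝ v (r • (q : EuclideanSpace ℝ (Fin (m + 3))))).le_opNorm q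
end

section
/- Let N ≥ 3, let Ω ⊆ ℝ^N be open, and let G : Ω → ℝ be twice continuously differentiable with ΔG(x) ≤ 0 for all x ∈ Ω and G(x) ≥ k for all x ∈ Ω, for some constant k > 0. Then for every continuously differentiable v : ℝ^N → ℝ with compact support contained in Ω and every δ ∈ (0,1), δ(1-δ) · ∫_Ω v(x)² |∇G(x)|²/G(x)² dx ≤ ∫_Ω |∇v(x)|² dx. -/
/-!
The inequality is the integrated form of a pointwise one. For the vector field
`F = δ v² ∇G / G`, which is `C¹` with compact support in `Ω`,
`div F = δ (2 v ∇v·∇G / G + v² ΔG / G - v² |∇G|² / G²)`. Expanding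
`0 ≤ |∇v - δ v ∇G / G|²` and using `ΔG ≤ 0 < G` gives
`δ (1 - δ) v² |∇G|² / G² + div F ≤ |∇v|²` on `Ω`, and `∫ div F = 0`.
-/

open MeasureTheory Real Set

/-- The Euclidean Laplacian, as the sum of second partial derivatives. -/
noncomputable def laplacian {N : ℕ} (f : EuclideanSpace ℝ (Fin N) → ℝ)
    (x : EuclideanSpace ℝ (Fin N)) : ℝ :=
  ∑ i : Fin N, fderiv ℝ (fun y => fderiv ℝ f y (EuclideanSpace.single i 1)) x
    (EuclideanSpace.single i 1)

/-- A regularity property of functions supported in `tsupport v ⊆ Ω` only has to be checked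
on `Ω`, since such functions vanish near every other point. -/
lemma mem_or_eventuallyEq_zero {E : Type*} [TopologicalSpace E] {Ω : Set E} {v : E → ℝ}
    (hvsupp : tsupport v ⊆ Ω) (x : E) : x ∈ Ω ∨ v =ᶠ[nhds x] 0 := by
  by_cases hx : x ∈ tsupport v
  · exact Or.inl (hvsupp hx)
  · exact Or.inr (notMem_tsupport_iff_eventuallyEq.mp hx)

lemma integral_fderiv_apply_eq_zero {E : Type*} [NormedAddCommGroup E] [NormedSpace ℝ E]
    [FiniteDimensional ℝ E] [MeasurableSpace E] [BorelSpace E] (μ : Measure E)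
    [μ.IsAddHaarMeasure] {f : E → ℝ} (hf : ContDiff ℝ 1 f) (hfc : HasCompactSupport f) (e : E) :
    Integrable (fun x => fderiv ℝ f x e) μ ∧ ∫ x, fderiv ℝ f x e ∂μ = 0 := by
  have hint : Integrable (fun x => fderiv ℝ f x e) μ :=
    ((hf.continuous_fderiv one_ne_zero).clm_apply continuous_const).integrable_of_hasCompactSupport
      (hfc.fderiv_apply ℝ e)
  refine ⟨hint, ?_⟩
  have h := integral_mul_fderiv_eq_neg_fderiv_mul_of_integrable (𝕜 := ℝ) (μ := μ) (v := e)
    (f := fun _ : E => (1 : ℝ)) (g := f) (by simp) (by simpa using hint)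
    (by simpa using hf.continuous.integrable_of_hasCompactSupport hfc)
    (by intro x _; fun_prop) (by intro x _; exact hf.differentiable one_ne_zero x)
  simpa using h

lemma norm_sq_eq_sum_single {N : ℕ} (L : EuclideanSpace ℝ (Fin N) →L[ℝ] ℝ) :
    ‖L‖ ^ 2 = ∑ i : Fin N, L (EuclideanSpace.single i 1) ^ 2 := by
  rw [(EuclideanSpace.basisFun (Fin N) ℝ).norm_dual]
  simp

/-- The `i`-th summand of the pointwise inequality: `a`, `b`, `c` stand for `∂ᵢv`, `∂ᵢG`,
`∂ᵢ²G`, and the second summand on the left is `δ` times `∂ᵢ (v² ∂ᵢG / G)`. -/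
lemma pointwise_summand (δ v g a b c : ℝ) (hg : 0 < g) :
    δ * (1 - δ) * (v ^ 2 * b ^ 2 / g ^ 2)
      + δ * (2 * v * a * b / g + v ^ 2 * c / g - v ^ 2 * b ^ 2 / g ^ 2)
      ≤ a ^ 2 + δ * (v ^ 2 / g) * c := by
  have h : a ^ 2 + δ * (v ^ 2 / g) * c - (δ * (1 - δ) * (v ^ 2 * b ^ 2 / g ^ 2)
      + δ * (2 * v * a * b / g + v ^ 2 * c / g - v ^ 2 * b ^ 2 / g ^ 2))
      = (a - δ * v * b / g) ^ 2 := by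
    field_simp
    ring
  nlinarith [sq_nonneg (a - δ * v * b / g)]

/-- The superharmonic-function Hardy lemma, inequality (2.7) in the proof of
Proposition 2.1. -/
theorem hardy_from_superharmonic
    (N : ℕ) (hN : 3 ≤ N)
    (Ω : Set (EuclideanSpace ℝ (Fin N))) (hΩ : IsOpen Ω)
    (G : EuclideanSpace ℝ (Fin N) → ℝ) (hG : ContDiffOn ℝ 2 G Ω)
    (hGsuper : ∀ x ∈ Ω, laplacian G x ≤ 0)
    (k : ℝ) (hk : 0 < k) (hGk : ∀ x ∈ Ω, k ≤ G x)
    (v : EuclideanSpace ℝ (Fin N) → ℝ)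
    (hv : ContDiff ℝ 1 v) (hvc : HasCompactSupport v) (hvsupp : tsupport v ⊆ Ω)
    (δ : ℝ) (hδ : δ ∈ Set.Ioo (0 : ℝ) 1) :
    δ * (1 - δ) * ∫ x in Ω, v x ^ 2 * ‖fderiv ℝ G x‖ ^ 2 / G x ^ 2 ≤
      ∫ x in Ω, ‖fderiv ℝ v x‖ ^ 2 := by
  have hGpos : ∀ x ∈ Ω, 0 < G x := fun x hx => hk.trans_le (hGk x hx)
  have hGat : ∀ x ∈ Ω, ContDiffAt ℝ 2 G x := fun x hx => hG.contDiffAt (hΩ.mem_nhds hx)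
  have hDG : ∀ x ∈ Ω, ContDiffAt ℝ 1 (fderiv ℝ G) x := fun x hx =>
    (hGat x hx).fderiv_right (by norm_num)
  have hv0 : ∀ x, x ∉ Ω → v x = 0 := fun x hx =>
    image_eq_zero_of_notMem_tsupport fun h => hx (hvsupp h)
  have hDv0 : ∀ x, x ∉ Ω → fderiv ℝ v x = 0 := fun x hx =>
    fderiv_of_notMem_tsupport ℝ fun h => hx (hvsupp h)
  let F : Fin N → EuclideanSpace ℝ (Fin N) → ℝ := fun i x =>
    v x ^ 2 * fderiv ℝ G x (EuclideanSpace.single i 1) / G x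
  let D : EuclideanSpace ℝ (Fin N) → ℝ := fun x =>
    ∑ i, fderiv ℝ (F i) x (EuclideanSpace.single i 1)
  have hFsmooth : ∀ i, ContDiff ℝ 1 (F i) := by
    intro i
    rw [contDiff_iff_contDiffAt]
    intro x
    rcases mem_or_eventuallyEq_zero hvsupp x with hx | hx
    · exact ((hv.contDiffAt.pow 2).mul ((hDG x hx).clm_apply contDiffAt_const)).div
        ((hGat x hx).of_le (by norm_num)) (hGpos x hx).ne'
    · refine (contDiffAt_const (c := (0 : ℝ))).congr_of_eventuallyEq ?_
      filter_upwards [hx] with y hy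
      simp [F, hy]
  have hFc : ∀ i, HasCompactSupport (F i) := fun i => hvc.mono fun x hx hvx => hx (by simp [F, hvx])
  have hFint := fun i => integral_fderiv_apply_eq_zero volume (hFsmooth i) (hFc i)
    (EuclideanSpace.single i 1)
  have hDint : Integrable D := integrable_finsetSum _ fun i _ => (hFint i).1
  have hD0 : ∫ x, D x = 0 := by
    simp only [D]
    rw [integral_finsetSum _ fun i _ => (hFint i).1]
    exact Finset.sum_eq_zero fun i _ => (hFint i).2
  let W : EuclideanSpace ℝ (Fin N) → ℝ := fun x => v x ^ 2 * ‖fderiv ℝ G x‖ ^ 2 / G x ^ 2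
  have hWint : Integrable W := by
    refine Continuous.integrable_of_hasCompactSupport ?_
      (hvc.mono fun x hx hvx => hx (by simp [W, hvx]))
    rw [continuous_iff_continuousAt]
    intro x
    rcases mem_or_eventuallyEq_zero hvsupp x with hx | hx
    · exact ((hv.continuous.continuousAt.pow 2).mul ((hDG x hx).continuousAt.norm.pow 2)).div₀
        ((hGat x hx).continuousAt.pow 2) (pow_ne_zero 2 (hGpos x hx).ne')
    · refine (continuousAt_const (y := (0 : ℝ))).congr ?_
      filter_upwards [hx] with y hy
      simp [W, hy]
  have hVint : Integrable fun x => ‖fderiv ℝ v x‖ ^ 2 := by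
    refine Continuous.integrable_of_hasCompactSupport
      ((hv.continuous_fderiv one_ne_zero).norm.pow 2) ?_
    exact (hvc.fderiv ℝ).mono fun x hx h => hx (by simp [h])
  have hFderiv : ∀ i, ∀ x ∈ Ω, fderiv ℝ (F i) x (EuclideanSpace.single i 1) =
      2 * v x * fderiv ℝ v x (EuclideanSpace.single i 1)
          * fderiv ℝ G x (EuclideanSpace.single i 1) / G x
        + v x ^ 2 * fderiv ℝ (fun y => fderiv ℝ G y (EuclideanSpace.single i 1)) x
          (EuclideanSpace.single i 1) / G x
        - v x ^ 2 * fderiv ℝ G x (EuclideanSpace.single i 1) ^ 2 / G x ^ 2 := by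
    intro i x hx
    have h1 : HasFDerivAt v (fderiv ℝ v x) x :=
      (hv.differentiable one_ne_zero x).hasFDerivAt
    have h2 : HasFDerivAt G (fderiv ℝ G x) x :=
      ((hGat x hx).differentiableAt (by norm_num)).hasFDerivAt
    have h3 := (((hDG x hx).clm_apply (contDiffAt_const
      (c := EuclideanSpace.single i (1 : ℝ)))).differentiableAt one_ne_zero).hasFDerivAt
    have h4 := ((h1.pow 2).mul h3).mul ((hasDerivAt_inv (hGpos x hx).ne').comp_hasFDerivAt x h2)
    have hg := (hGpos x hx).ne'
    have hF : F i = ((fun y => v y ^ 2) * fun y => fderiv ℝ G y (EuclideanSpace.single i 1))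
        * (fun t => t⁻¹) ∘ G := by
      funext y
      simp [F, div_eq_mul_inv]
    rw [hF, h4.fderiv]
    simp
    field_simp
    ring
  have hpt : ∀ x, δ * (1 - δ) * W x + δ * D x ≤ ‖fderiv ℝ v x‖ ^ 2 := by
    intro x
    rcases mem_or_eventuallyEq_zero hvsupp x with hx | hx
    · have hsum := Finset.sum_le_sum fun i (_ : i ∈ Finset.univ) =>
        pointwise_summand δ (v x) (G x) (fderiv ℝ v x (EuclideanSpace.single i 1))
          (fderiv ℝ G x (EuclideanSpace.single i 1))
          (fderiv ℝ (fun y => fderiv ℝ G y (EuclideanSpace.single i 1)) x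
            (EuclideanSpace.single i 1)) (hGpos x hx)
      simp only [Finset.sum_add_distrib, ← Finset.mul_sum, ← Finset.sum_div] at hsum
      have hL : δ * (v x ^ 2 / G x) * laplacian G x ≤ 0 :=
        mul_nonpos_of_nonneg_of_nonpos
          (mul_nonneg hδ.1.le (div_nonneg (sq_nonneg _) (hGpos x hx).le)) (hGsuper x hx)
      rw [laplacian] at hL
      simp only [W, D, norm_sq_eq_sum_single, hFderiv _ x hx]
      linarith
    · have hD : D x = 0 := by
        refine Finset.sum_eq_zero fun i _ => ?_
        have : F i =ᶠ[nhds x] fun _ => 0 := by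
          filter_upwards [hx] with y hy
          simp [F, hy]
        rw [this.fderiv_eq]
        simp
      have hW : W x = 0 := by simp [W, hx.eq_of_nhds]
      rw [hD, hW]
      simp
  have hmain := integral_mono ((hWint.const_mul (δ * (1 - δ))).add (hDint.const_mul δ)) hVint hpt
  rw [integral_add' (hWint.const_mul (δ * (1 - δ))) (hDint.const_mul δ), integral_const_mul,
    integral_const_mul, hD0, mul_zero, add_zero] at hmain
  rw [setIntegral_eq_integral_of_forall_compl_eq_zero fun x hx => by simp [hv0 x hx],
    setIntegral_eq_integral_of_forall_compl_eq_zero fun x hx => by simp [hDv0 x hx]]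
  exact hmain
end

section
/- Let N ≥ 3 be an integer and f : ℝ → ℝ be continuously differentiable. Let u : (0,1) → ℝ be twice continuously differentiable with u(r) > 0 and u'(r) < 0 for all r ∈ (0,1), satisfying -u''(r) - ((N-1)/r)·u'(r) = f(u(r)) on (0,1). Then for every smooth function g : ℝ → ℝ, not identically zero, with compact support contained in (0,1), one has the strict inequality ∫_0^1 r^{N-1}( g'(r)² - f'(u(r))·g(r)² ) dr > -(N-1) · ∫_0^1 r^{N-3} g(r)² dr. -/
open MeasureTheory Real Set

/-!
Differentiating the equation shows that `w = u'`, which is negative on `(0,1)`, solves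
`(r^{N-1} w')' = r^{N-1} (-f'(u) + (N-1)/r²) w`. Picone's identity (`picone_hasDerivAt`) then gives
`r^{N-1} (g'² - f'(u) g²) + (N-1) r^{N-3} g² = r^{N-1} (g' - g w'/w)² + (r^{N-1} (w'/w) g²)'`.
The last term integrates to zero because `g` is supported in some `(a,b)` with `[a,b] ⊆ (0,1)`.
The square term has a positive integral: otherwise `g' = g w'/w`, so `g/w` is constant on `[a,b]`
(`eq_zero_of_deriv_eq_mul_logDeriv`), and `g(a) = 0` forces `g = 0`.
-/

/-- Picone's identity. Here `w`, `v`, `g` stand for `u'`, `u''`, the test function, `p` for the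
value of `g'` and `c` for that of `f'(u)`; the hypothesis on `v` is the differentiated equation. -/
lemma picone_hasDerivAt {N : ℕ} (hN : 3 ≤ N) {w v g : ℝ → ℝ} {r c p : ℝ} (hr : 0 < r)
    (hw0 : w r ≠ 0) (hw : HasDerivAt w (v r) r)
    (hv : HasDerivAt v (-c * w r + ((N : ℝ) - 1) / r ^ 2 * w r - ((N : ℝ) - 1) / r * v r) r)
    (hg : HasDerivAt g p r) :
    HasDerivAt (fun x => x ^ (N - 1) * (v x / w x) * g x ^ 2)
      (r ^ (N - 1) * (p ^ 2 - c * g r ^ 2) + ((N : ℝ) - 1) * (r ^ (N - 3) * g r ^ 2)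
        - r ^ (N - 1) * (p - g r * (v r / w r)) ^ 2) r := by
  obtain ⟨k, rfl⟩ : ∃ k, N = k + 3 := ⟨N - 3, by omega⟩
  have h := ((hasDerivAt_pow (k + 3 - 1) r).mul (hv.div hw hw0)).mul (hg.pow 2)
  refine HasDerivAt.congr_deriv h ?_
  have e1 : k + 3 - 1 = k + 2 := by omega
  have e2 : k + 3 - 3 = k := by omega
  have e3 : k + 2 - 1 = k + 1 := by omega
  simp only [e1, e2, e3, Pi.mul_apply, Pi.div_apply, Pi.pow_apply]
  push_cast
  field_simp
  ring

/-- If `g' = g w'/w` on `[a,b]` and `g a = 0`, then `g/w` is constant, so `g` vanishes. -/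
lemma eq_zero_of_deriv_eq_mul_logDeriv {a b : ℝ} {w v g : ℝ → ℝ}
    (hw0 : ∀ r ∈ Icc a b, w r ≠ 0) (hw : ∀ r ∈ Icc a b, HasDerivAt w (v r) r)
    (hg : Differentiable ℝ g) (hga : g a = 0)
    (h : ∀ r ∈ Icc a b, deriv g r - g r * (v r / w r) = 0) :
    ∀ r ∈ Icc a b, g r = 0 := by
  have hd : ∀ r ∈ Icc a b, HasDerivAt (fun x => g x / w x) 0 r := by
    intro r hr
    refine HasDerivAt.congr_deriv ((hg r).hasDerivAt.div (hw r hr) (hw0 r hr)) ?_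
    have h1 := h r hr
    have h0 := hw0 r hr
    have h2 : deriv g r = g r * (v r / w r) := by linarith
    rw [h2]
    field_simp
    ring
  intro r hr
  have hc := constant_of_has_deriv_right_zero (f := fun x => g x / w x)
    (fun x hx => (hd x hx).continuousAt.continuousWithinAt)
    (fun x hx => (hd x (Ico_subset_Icc_self hx)).hasDerivWithinAt) r hr
  simp only [hga, zero_div] at hc
  exact (div_eq_zero_iff.mp hc).resolve_right (hw0 r hr)

/-- A nonempty compact subset of `(0,1)` lies in `(a,b)` for some `[a,b] ⊆ (0,1)`. -/
lemma exists_Ioo_of_compact_subset {K : Set ℝ} (hK : IsCompact K) (hne : K.Nonempty)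
    (hsub : K ⊆ Ioo 0 1) :
    ∃ a b : ℝ, a < b ∧ 0 < a ∧ b < 1 ∧ K ⊆ Ioo a b := by
  obtain ⟨m, hm, hmin⟩ := hK.exists_isLeast hne
  obtain ⟨M, hM, hmax⟩ := hK.exists_isGreatest hne
  have h1 := hsub hm
  have h2 := hsub hM
  have h3 := hmin hM
  refine ⟨m / 2, (M + 1) / 2, ?_, ?_, ?_, fun x hx => ?_⟩
  · linarith [h1.1, h2.2]
  · linarith [h1.1]
  · linarith [h2.2]
  · have := hmin hx
    have := hmax hx
    constructor <;> linarith [h1.1, h2.2]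

lemma setIntegral_Ioo_eq_intervalIntegral {a b : ℝ} (hab : a < b) (ha : 0 < a) (hb : b < 1)
    {F : ℝ → ℝ} (hF : ∀ x, x ∉ Ioo a b → F x = 0) :
    ∫ r in Ioo (0 : ℝ) 1, F r = ∫ r in a..b, F r := by
  rw [intervalIntegral.integral_of_le hab.le]
  refine setIntegral_eq_of_subset_of_forall_sdiff_eq_zero measurableSet_Ioo
    (fun x hx => ⟨ha.trans hx.1, hx.2.trans_lt hb⟩) fun x hx => hF x fun h => hx.2 ⟨h.1, h.2.le⟩

/-- Variational form of Proposition 3.5: the first radial singular eigenvalue of the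
linearized operator at a positive decreasing radial solution is strictly greater
than `-(N-1)`. -/
theorem radial_singular_eigenvalue_lower_bound
    (N : ℕ) (hN : 3 ≤ N) (f : ℝ → ℝ) (hf : ContDiff ℝ 1 f)
    (u : ℝ → ℝ) (hu : ContDiffOn ℝ 2 u (Set.Ioo 0 1))
    (hupos : ∀ r ∈ Set.Ioo (0 : ℝ) 1, 0 < u r)
    (hudec : ∀ r ∈ Set.Ioo (0 : ℝ) 1, deriv u r < 0)
    (heq : ∀ r ∈ Set.Ioo (0 : ℝ) 1,
      -(deriv (deriv u) r) - ((N : ℝ) - 1) / r * deriv u r = f (u r))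
    (g : ℝ → ℝ) (hg : ContDiff ℝ (⊤ : ℕ∞) g) (hg0 : g ≠ 0)
    (hgc : HasCompactSupport g) (hgsupp : tsupport g ⊆ Set.Ioo 0 1) :
    ∫ r in Set.Ioo (0 : ℝ) 1,
        r ^ (N - 1) * ((deriv g r) ^ 2 - deriv f (u r) * g r ^ 2) >
      -((N : ℝ) - 1) * ∫ r in Set.Ioo (0 : ℝ) 1, r ^ (N - 3) * g r ^ 2 := by
  have hgne : (tsupport g).Nonempty := by
    rw [nonempty_iff_ne_empty]
    intro h
    exact hg0 (tsupport_eq_empty_iff.mp h)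
  obtain ⟨a, b, hab, ha, hb, hsub⟩ := exists_Ioo_of_compact_subset hgc hgne hgsupp
  have hI : Icc a b ⊆ Ioo 0 1 := fun x hx => ⟨ha.trans_le hx.1, hx.2.trans_lt hb⟩
  have hgz : ∀ x, x ∉ Ioo a b → g x = 0 := fun x hx => image_eq_zero_of_notMem_tsupport
    fun h => hx (hsub h)
  have hg'z : ∀ x, x ∉ Ioo a b → deriv g x = 0 := fun x hx =>
    image_eq_zero_of_notMem_tsupport fun h => hx (hsub (tsupport_deriv_subset h))
  have hgd : Differentiable ℝ g := hg.differentiable (by simp)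
  have hg'c : Continuous (deriv g) := hg.continuous_deriv (by simp)
  have hfd : Differentiable ℝ f := hf.differentiable (by simp)
  have hf'c : Continuous (deriv f) := hf.continuous_deriv (by simp)
  have hud : ∀ r ∈ Ioo (0 : ℝ) 1, HasDerivAt u (deriv u r) r := fun r hr =>
    ((hu.differentiableOn (by simp)).differentiableAt (isOpen_Ioo.mem_nhds hr)).hasDerivAt
  have hwd : ∀ r ∈ Ioo (0 : ℝ) 1, HasDerivAt (deriv u) (deriv (deriv u) r) r := by
    have h : ContDiffOn ℝ 1 (deriv u) (Ioo 0 1) :=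
      hu.deriv_of_isOpen isOpen_Ioo (by norm_num)
    exact fun r hr =>
      ((h.differentiableOn (by simp)).differentiableAt (isOpen_Ioo.mem_nhds hr)).hasDerivAt
  -- The equation expresses `u''` through differentiable functions, so `u''` is differentiable
  -- although `u` is only assumed `C²`.
  have hvd : ∀ r ∈ Ioo (0 : ℝ) 1, HasDerivAt (deriv (deriv u))
      (-(deriv f (u r)) * deriv u r + ((N : ℝ) - 1) / r ^ 2 * deriv u r
        - ((N : ℝ) - 1) / r * deriv (deriv u) r) r := by
    intro r hr
    have hr0 : r ≠ 0 := hr.1.ne'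
    have h1 : HasDerivAt (fun x => -(((N : ℝ) - 1) * x⁻¹ * deriv u x) - f (u x))
        (-(deriv f (u r)) * deriv u r + ((N : ℝ) - 1) / r ^ 2 * deriv u r
        - ((N : ℝ) - 1) / r * deriv (deriv u) r) r := by
      refine HasDerivAt.congr_deriv
        (((((hasDerivAt_inv hr0).const_mul ((N : ℝ) - 1)).mul (hwd r hr)).neg).sub
          ((hfd (u r)).hasDerivAt.comp r (hud r hr))) ?_
      field_simp
      ring
    refine h1.congr_of_eventuallyEq ?_
    filter_upwards [isOpen_Ioo.mem_nhds hr] with x hx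
    have := heq x hx
    rw [div_eq_mul_inv] at this
    linarith
  have huc : ContinuousOn u (Icc a b) := fun r hr =>
    (hud r (hI hr)).continuousAt.continuousWithinAt
  have hwc : ContinuousOn (deriv u) (Icc a b) := fun r hr =>
    (hwd r (hI hr)).continuousAt.continuousWithinAt
  have hvc : ContinuousOn (deriv (deriv u)) (Icc a b) := fun r hr =>
    (hvd r (hI hr)).continuousAt.continuousWithinAt
  have hw0 : ∀ r ∈ Icc a b, deriv u r ≠ 0 := fun r hr => (hudec r (hI hr)).ne
  rw [setIntegral_Ioo_eq_intervalIntegral hab ha hb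
      (fun x hx => by simp [hgz x hx, hg'z x hx]),
    setIntegral_Ioo_eq_intervalIntegral hab ha hb (fun x hx => by simp [hgz x hx])]
  have hgcon := hgd.continuous
  have hAc : ContinuousOn (fun r => r ^ (N - 1) * ((deriv g r) ^ 2 - deriv f (u r) * g r ^ 2))
      (Icc a b) := by
    have := hf'c.comp_continuousOn huc
    simp only [Function.comp_def] at this
    fun_prop
  have hBc : ContinuousOn (fun r => r ^ (N - 3) * g r ^ 2) (Icc a b) := by fun_prop
  have hSc : ContinuousOn (fun r => r ^ (N - 1) *
      (deriv g r - g r * (deriv (deriv u) r / deriv u r)) ^ 2) (Icc a b) := by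
    have := hvc.div hwc hw0
    fun_prop
  have hAi := hAc.intervalIntegrable_of_Icc (μ := volume) hab.le
  have hBi := (hBc.intervalIntegrable_of_Icc (μ := volume) hab.le).const_mul ((N : ℝ) - 1)
  have hSi := hSc.intervalIntegrable_of_Icc (μ := volume) hab.le
  have hftc := intervalIntegral.integral_eq_sub_of_hasDerivAt
    (fun r hr => by
      rw [uIcc_of_le hab.le] at hr
      exact picone_hasDerivAt hN (hI hr).1 (hw0 r hr) (hwd r (hI hr)) (hvd r (hI hr))
        (hgd r).hasDerivAt)
    ((hAi.add hBi).sub hSi)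
  rw [intervalIntegral.integral_sub (hAi.add hBi) hSi, intervalIntegral.integral_add hAi hBi,
    intervalIntegral.integral_const_mul, hgz a (by simp), hgz b (by simp)] at hftc
  have hpos : 0 < ∫ r in a..b, r ^ (N - 1) *
      (deriv g r - g r * (deriv (deriv u) r / deriv u r)) ^ 2 := by
    refine intervalIntegral.integral_pos hab hSc
      (fun r hr => mul_nonneg (pow_nonneg (ha.trans hr.1).le _) (sq_nonneg _)) ?_
    by_contra! hcon
    apply hg0
    funext x
    by_cases hx : x ∈ Ioo a b
    · refine eq_zero_of_deriv_eq_mul_logDeriv hw0 (fun r hr => hwd r (hI hr)) hgd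
        (hgz a (by simp)) (fun r hr => ?_) x (Ioo_subset_Icc_self hx)
      have hp : 0 < r ^ (N - 1) := pow_pos (hI hr).1 _
      have h1 := nonpos_of_mul_nonpos_right (hcon r hr) hp
      exact pow_eq_zero_iff (two_ne_zero) |>.mp (le_antisymm h1 (sq_nonneg _))
    · exact hgz x hx
  simp only [ne_eq, OfNat.ofNat_ne_zero, not_false_eq_true, zero_pow, mul_zero, sub_zero] at hftc
  linarith
end

section
/- Let N ≥ 3, p_S = (N+2)/(N-2), U(x) = ( N(N-2)/(N(N-2)+|x|²) )^{(N-2)/2}, V(x) = p_S · U(x)^{p_S - 1} = p_S · ( N(N-2)/(N(N-2)+|x|²) )², and η(x) = |x| / ( 1 + |x|²/(N(N-2)) )^{N/2}. Then η is twice differentiable on ℝ^N \ {0} and satisfies -Δη(x) - V(x)·η(x) = -(N-1)·η(x)/|x|² for every x ∈ ℝ^N \ {0}. -/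
/-!
Writing `s = ‖x‖²` and `c = N (N - 2)`, the function `η` is radial: `η(x) = g(s)` with
`g(s) = √s (1 + s / c) ^ (-N/2)`. A radial function satisfies `Δ (g(‖x‖²)) = 4 s g''(s) + 2 N g'(s)`
(`laplacian_radial`). The logarithmic derivative of `g` is the rational function
`h(s) = 1 / (2 s) - (N/2) / (c + s)`, so `g' = g h` and `g'' = g (h² + h')`; after dividing by `g`
the claim becomes an identity between rational functions of `s`.
-/

open MeasureTheory Real Set

/-- The singular radial eigenfunction `η` of Theorem 3.13. -/
noncomputable def eta (N : ℕ) (x : EuclideanSpace ℝ (Fin N)) : ℝ :=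
  ‖x‖ / (1 + ‖x‖ ^ 2 / ((N : ℝ) * ((N : ℝ) - 2))) ^ ((N : ℝ) / 2)

/-- The linearized potential at the standard bubble, `V = p_S U^{p_S-1}`. -/
noncomputable def Vpot (N : ℕ) (x : EuclideanSpace ℝ (Fin N)) : ℝ :=
  ((N : ℝ) + 2) / ((N : ℝ) - 2) *
    ((N : ℝ) * ((N : ℝ) - 2) / ((N : ℝ) * ((N : ℝ) - 2) + ‖x‖ ^ 2)) ^ 2

/-- The Laplacian of `g(‖x‖²)` away from the origin is `4 s g''(s) + 2 N g'(s)` at `s = ‖x‖²`. -/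
lemma laplacian_radial {N : ℕ} (g g' : ℝ → ℝ) (g'' : ℝ) (x : EuclideanSpace ℝ (Fin N))
    (hx : x ≠ 0) (hg : ∀ s, 0 < s → HasDerivAt g (g' s) s)
    (hg' : HasDerivAt g' g'' (‖x‖ ^ 2)) :
    laplacian (fun y => g (‖y‖ ^ 2)) x = 4 * ‖x‖ ^ 2 * g'' + 2 * N * g' (‖x‖ ^ 2) := by
  have hsq : ∀ y : EuclideanSpace ℝ (Fin N),
      HasFDerivAt (fun y => ‖y‖ ^ 2) (2 • innerSL ℝ y) y := fun y =>
    (hasStrictFDerivAt_norm_sq y).hasFDerivAt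
  have hterm : ∀ i : Fin N,
      fderiv ℝ (fun y => fderiv ℝ (fun y => g (‖y‖ ^ 2)) y (EuclideanSpace.single i 1)) x
        (EuclideanSpace.single i 1) = 4 * g'' * x i ^ 2 + 2 * g' (‖x‖ ^ 2) := by
    intro i
    have hev : (fun y => fderiv ℝ (fun y => g (‖y‖ ^ 2)) y (EuclideanSpace.single i 1))
        =ᶠ[nhds x] fun y => g' (‖y‖ ^ 2) * (2 * y i) := by
      filter_upwards [isOpen_ne.mem_nhds hx] with y hy
      have hpos : 0 < ‖y‖ ^ 2 := by have := norm_pos_iff.mpr hy; positivity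
      have h := (hg _ hpos).comp_hasFDerivAt y (hsq y)
      have h2 := h.fderiv
      simp only [Function.comp_def] at h2
      rw [h2]
      simp [EuclideanSpace.inner_single_right]
    have hc : HasFDerivAt (fun y : EuclideanSpace ℝ (Fin N) => 2 * y i)
        ((2 : ℝ) • (EuclideanSpace.proj i : EuclideanSpace ℝ (Fin N) →L[ℝ] ℝ)) x :=
      (EuclideanSpace.proj i : EuclideanSpace ℝ (Fin N) →L[ℝ] ℝ).hasFDerivAt.const_mul 2
    have h := (hg'.comp_hasFDerivAt x (hsq x)).mul hc
    have h2 := (h.congr_of_eventuallyEq hev).fderiv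
    rw [h2]
    simp [EuclideanSpace.inner_single_right]
    ring
  unfold laplacian
  rw [Finset.sum_congr rfl fun i _ => hterm i, Finset.sum_add_distrib, ← Finset.mul_sum,
    EuclideanSpace.real_norm_sq_eq]
  simp
  ring

/-- The profile of `η` as a function of `s = ‖x‖²`. -/
noncomputable def etaProfile (N c s : ℝ) : ℝ := √s / (1 + s / c) ^ (N / 2)

/-- The logarithmic derivative of `etaProfile`. -/
noncomputable def etaLogDeriv (N c s : ℝ) : ℝ := 1 / (2 * s) - N / 2 / (c + s)

lemma hasDerivAt_etaProfile {N c s : ℝ} (hc : 0 < c) (hs : 0 < s) :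
    HasDerivAt (etaProfile N c) (etaProfile N c s * etaLogDeriv N c s) s := by
  have hw : 0 < 1 + s / c := by positivity
  have h1 := Real.hasDerivAt_sqrt hs.ne'
  have h2 : HasDerivAt (fun t : ℝ => 1 + t / c) (1 / c) s :=
    ((hasDerivAt_id s).div_const c).const_add 1
  have h3 := h2.rpow_const (p := N / 2) (Or.inl hw.ne')
  have h4 := h1.div h3 (Real.rpow_pos_of_pos hw _).ne'
  refine h4.congr_deriv ?_
  unfold etaProfile etaLogDeriv
  rw [Real.rpow_sub_one hw.ne']
  have hP := Real.rpow_pos_of_pos hw (N / 2)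
  set P := (1 + s / c) ^ (N / 2)
  have hr : 0 < √s := Real.sqrt_pos.mpr hs
  obtain ⟨r, hrs⟩ : ∃ r, √s = r := ⟨_, rfl⟩
  have hsr : s = r ^ 2 := by rw [← hrs, Real.sq_sqrt hs.le]
  have hcs : c + s ≠ 0 := by positivity
  have hwc : 1 + s / c = (c + s) / c := by field_simp
  clear_value P
  rw [hrs] at hr ⊢
  rw [hwc]
  subst hsr
  field_simp

lemma hasDerivAt_etaLogDeriv {N c s : ℝ} (hc : 0 < c) (hs : 0 < s) :
    HasDerivAt (etaLogDeriv N c) (-1 / (2 * s ^ 2) + N / 2 / (c + s) ^ 2) s := by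
  have hcs : c + s ≠ 0 := by positivity
  have h1 : HasDerivAt (fun t : ℝ => 2 * t) 2 s := by
    simpa using (hasDerivAt_id s).const_mul 2
  have h2 : HasDerivAt (fun t : ℝ => c + t) 1 s := (hasDerivAt_id s).const_add c
  have h3 := ((hasDerivAt_const s (1 : ℝ)).div h1 (by positivity)).sub
    ((hasDerivAt_const s (N / 2)).div h2 hcs)
  refine h3.congr_deriv ?_
  field_simp
  ring

/-- Theorem 3.13 (PDE identity): `η` is a singular eigenfunction of the linearized
operator at the standard bubble with singular eigenvalue `-(N-1)`. -/
theorem eta_singular_eigenfunction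
    (N : ℕ) (hN : 3 ≤ N) :
    ContDiffOn ℝ 2 (eta N) {0}ᶜ ∧
    ∀ x : EuclideanSpace ℝ (Fin N), x ≠ 0 →
      -laplacian (eta N) x - Vpot N x * eta N x
        = -((N : ℝ) - 1) * eta N x / ‖x‖ ^ 2 := by
  have hN3 : (3 : ℝ) ≤ N := by exact_mod_cast hN
  have hN2 : (0 : ℝ) < N - 2 := by linarith
  have hc : (0 : ℝ) < N * ((N : ℝ) - 2) := by positivity
  constructor
  · intro x hx
    have hw : 0 < 1 + ‖x‖ ^ 2 / ((N : ℝ) * ((N : ℝ) - 2)) := by positivity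
    have h1 : ContDiffAt ℝ 2 (fun y : EuclideanSpace ℝ (Fin N) => ‖y‖) x :=
      contDiffAt_norm ℝ hx
    have h2 : ContDiffAt ℝ 2 (fun y : EuclideanSpace ℝ (Fin N) =>
        1 + ‖y‖ ^ 2 / ((N : ℝ) * ((N : ℝ) - 2))) x :=
      contDiffAt_const.add ((h1.pow 2).div_const _)
    exact (h1.div (h2.rpow_const_of_ne hw.ne') (Real.rpow_pos_of_pos hw _).ne').contDiffWithinAt
  · intro x hx
    have hs : 0 < ‖x‖ ^ 2 := by have := norm_pos_iff.mpr hx; positivity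
    have heta : eta N = fun y => etaProfile N (N * ((N : ℝ) - 2)) (‖y‖ ^ 2) := by
      funext y
      simp [eta, etaProfile]
    have hlap := laplacian_radial (etaProfile N (N * ((N : ℝ) - 2)))
      (fun s => etaProfile N (N * ((N : ℝ) - 2)) s * etaLogDeriv N (N * ((N : ℝ) - 2)) s) _ x hx
      (fun s hs => hasDerivAt_etaProfile hc hs)
      ((hasDerivAt_etaProfile hc hs).mul (hasDerivAt_etaLogDeriv hc hs))
    rw [heta, hlap]
    clear hlap heta
    unfold Vpot etaLogDeriv
    beta_reduce
    generalize etaProfile N (N * ((N : ℝ) - 2)) (‖x‖ ^ 2) = G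
    generalize ‖x‖ ^ 2 = s at hs
    generalize (N : ℝ) = n at *
    obtain ⟨m, rfl⟩ : ∃ m, n = m + 2 := ⟨n - 2, by ring⟩
    have hm : 0 < m := by linarith
    simp only [add_sub_cancel_right] at *
    have hms : (m + 2) * m + s ≠ 0 := by positivity
    field_simp
    ring
end
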